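/- Let q, P ∈ ℂ⁴, set q₊ := q + P/2 and q₋ := q − P/2, let B₊, B₋ ∈ ℂ, and set D := −q² + P²/4 + B₋B₊ (Minkowski squares). Then the matrix identity (q̸₊ − B₊·I) · [D·I + (B₋ − B₊)·q̸ + ((B₋ + B₊)/2)·P̸ − (1/2)(P̸q̸ − q̸P̸)] · γ₅ · (q̸₋ − B₋·I) = (q₊² − B₊²)(q₋² − B₋²)·γ₅ holds in M₄(ℂ). (This identity encodes the paper's Eqs. (16)–(18): sandwiching the displayed bracket between the inverse quark propagators with A ≡ 1 yields a purely pseudoscalar matrix, i.e. the Bethe–Salpeter amplitude whose components satisfy φ_P = ((B₋ − B₊)/D)φ_S, φ_Q = ((B₋ + B₊)/(2D))φ_S, φ_T = −φ_S/D solves an equation with purely pseudoscalar right-hand side.) -/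

import Mathlib

/-!
Write `a = slash (q + P/2)` and `b = slash (q - P/2)`. The bracket factorises as
`-(a + Bp) * (b - Bm)`: expanding this product gives the scalar, vector and commutator terms,
because `slash v * slash v = msq v • 1` (`slash_mul_self`). Since `γ5` anticommutes with every
slashed vector (`γ5_mul_slash`), moving it to the right past the last factor gives
`γ5 * (b - Bm) = -(b + Bm) * γ5`. The product is therefore
`(a - Bp) * (a + Bp) * (b - Bm) * (b + Bm) * γ5`, and each pair of conjugate factors is a scalar.
-/

open Matrix BigOperators

noncomputable section

abbrev M4 := Matrix (Fin 4) (Fin 4) ℂ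

/-- Dirac gamma matrix γ⁰ = diag(1,1,−1,−1). -/
def γ0 : M4 := !![1,0,0,0; 0,1,0,0; 0,0,-1,0; 0,0,0,-1]
/-- Dirac gamma matrix γ¹ = [[0,σ₁],[−σ₁,0]]. -/
def γ1 : M4 := !![0,0,0,1; 0,0,1,0; 0,-1,0,0; -1,0,0,0]
/-- Dirac gamma matrix γ² = [[0,σ₂],[−σ₂,0]]. -/
def γ2 : M4 := !![0,0,0,-Complex.I; 0,0,Complex.I,0; 0,Complex.I,0,0; -Complex.I,0,0,0]
/-- Dirac gamma matrix γ³ = [[0,σ₃],[−σ₃,0]]. -/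
def γ3 : M4 := !![0,0,1,0; 0,0,0,-1; -1,0,0,0; 0,1,0,0]
/-- γ₅ := i γ⁰γ¹γ²γ³. -/
def γ5 : M4 := Complex.I • (γ0 * γ1 * γ2 * γ3)

/-- Upper-index gamma matrices γ^μ. -/
def γup : Fin 4 → M4 := ![γ0, γ1, γ2, γ3]
/-- Diagonal of the Minkowski metric g = diag(1,−1,−1,−1). -/
def η : Fin 4 → ℂ := ![1, -1, -1, -1]
/-- Lower-index gamma matrices γ_μ (γ_0 = γ⁰, γ_k = −γᵏ). -/
def γdn (μ : Fin 4) : M4 := η μ • γup μ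
/-- Minkowski metric g_{μν}. -/
def gmet (μ ν : Fin 4) : ℂ := if μ = ν then η μ else 0

/-- Feynman slash v̸ = v⁰γ⁰ − v¹γ¹ − v²γ² − v³γ³. -/
def slash (v : Fin 4 → ℂ) : M4 := v 0 • γ0 - v 1 • γ1 - v 2 • γ2 - v 3 • γ3
/-- Complexification of a real 4-vector. -/
def cx (v : Fin 4 → ℝ) : Fin 4 → ℂ := fun μ => (v μ : ℂ)
/-- Minkowski square v² = (v⁰)² − (v¹)² − (v²)² − (v³)². -/
def msq (v : Fin 4 → ℂ) : ℂ := v 0 ^ 2 - v 1 ^ 2 - v 2 ^ 2 - v 3 ^ 2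

/-- Scalar–pseudoscalar projector Pproj(M) = (1/4)(tr(M)·I + tr(γ₅M)·γ₅). -/
def Pproj (M : M4) : M4 := (1/4 : ℂ) • (M.trace • (1 : M4) + (γ5 * M).trace • γ5)

/-- Extended projector Pproj′ keeping scalar, pseudoscalar, vector and axial-vector parts. -/
def Pproj' (M : M4) : M4 :=
  (1/4 : ℂ) • (M.trace • (1 : M4) + (γ5 * M).trace • γ5
    + ∑ μ : Fin 4, (γup μ * M).trace • γdn μ
    + ∑ μ : Fin 4, (γup μ * γ5 * M).trace • (γ5 * γdn μ))

theorem slash_mul_self (v : Fin 4 → ℂ) : slash v * slash v = msq v • (1 : M4) := by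
  ext i j
  fin_cases i <;> fin_cases j <;>
    simp [slash, msq, γ0, γ1, γ2, γ3, Matrix.mul_apply, Fin.sum_univ_four] <;>
    ring_nf <;> simp [Complex.I_sq] <;> ring

/-- In the Dirac representation `γ5` is the block matrix with zero diagonal blocks and identity
off-diagonal blocks. -/
theorem γ5_eq : γ5 = !![0,0,1,0; 0,0,0,1; 1,0,0,0; 0,1,0,0] := by
  ext i j
  fin_cases i <;> fin_cases j <;>
    simp [γ5, γ0, γ1, γ2, γ3]

theorem γ5_mul_slash (v : Fin 4 → ℂ) : γ5 * slash v = -(slash v * γ5) := by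
  rw [γ5_eq]
  ext i j
  fin_cases i <;> fin_cases j <;>
    simp [slash, γ0, γ1, γ2, γ3, Matrix.mul_apply, Fin.sum_univ_four] <;> ring

theorem slash_add (v w : Fin 4 → ℂ) : slash (v + w) = slash v + slash w := by
  simp only [slash, Pi.add_apply]
  module

theorem slash_sub (v w : Fin 4 → ℂ) : slash (v - w) = slash v - slash w := by
  simp only [slash, Pi.sub_apply]
  module

theorem slash_smul (c : ℂ) (v : Fin 4 → ℂ) : slash (c • v) = c • slash v := by
  simp only [slash, Pi.smul_apply, smul_eq_mul]
  module

theorem slash_sub_mul_slash_add (v : Fin 4 → ℂ) (c : ℂ) :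
    (slash v - c • (1 : M4)) * (slash v + c • (1 : M4)) = (msq v - c ^ 2) • (1 : M4) := by
  simp only [sub_mul, mul_add, slash_mul_self, smul_mul_assoc, mul_smul_comm, one_mul, mul_one]
  module

/-- The scalar parts combine through `msq q - msq P / 4`, and the products
`slash q * slash P` and `slash P * slash q` enter with opposite signs, which produces the
commutator. -/
theorem bracket_factorisation (q P : Fin 4 → ℂ) (Bp Bm : ℂ) :
    (-msq q + msq P / 4 + Bm * Bp) • (1 : M4)
        + (Bm - Bp) • slash q + ((Bm + Bp) / 2) • slash P
        - (1/2 : ℂ) • (slash P * slash q - slash q * slash P)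
      = -((slash (q + (1/2 : ℂ) • P) + Bp • (1 : M4)) *
          (slash (q - (1/2 : ℂ) • P) - Bm • (1 : M4))) := by
  simp only [slash_add, slash_sub, slash_smul, add_mul, mul_sub, slash_mul_self,
    smul_mul_assoc, mul_smul_comm, one_mul, mul_one]
  module

theorem γ5_mul_slash_sub (v : Fin 4 → ℂ) (c : ℂ) :
    γ5 * (slash v - c • (1 : M4)) = -((slash v + c • (1 : M4)) * γ5) := by
  simp only [mul_sub, add_mul, γ5_mul_slash, smul_mul_assoc, mul_smul_comm, one_mul, mul_one]
  module

/-- Matrix identity encoding Eqs. (16)–(18) of the paper: sandwiching the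
displayed bracket between the inverse quark propagators (with A ≡ 1) and γ₅
yields a purely pseudoscalar matrix. -/
theorem bracket_sandwich_pseudoscalar (q P : Fin 4 → ℂ) (Bp Bm : ℂ) :
    (slash (q + (1/2 : ℂ) • P) - Bp • (1 : M4)) *
      ((-msq q + msq P / 4 + Bm * Bp) • (1 : M4)
        + (Bm - Bp) • slash q + ((Bm + Bp) / 2) • slash P
        - (1/2 : ℂ) • (slash P * slash q - slash q * slash P)) * γ5 *
      (slash (q - (1/2 : ℂ) • P) - Bm • (1 : M4))
    = ((msq (q + (1/2 : ℂ) • P) - Bp ^ 2) *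
        (msq (q - (1/2 : ℂ) • P) - Bm ^ 2)) • γ5 := by
  rw [bracket_factorisation, mul_assoc _ γ5, γ5_mul_slash_sub]
  set a := slash (q + (1/2 : ℂ) • P) with ha
  set b := slash (q - (1/2 : ℂ) • P) with hb
  calc
    _ = ((a - Bp • (1 : M4)) * (a + Bp • (1 : M4))) *
        ((b - Bm • (1 : M4)) * (b + Bm • (1 : M4))) * γ5 := by
      simp only [mul_neg, neg_mul, neg_neg, mul_assoc]
    _ = _ := by
      rw [ha, hb, slash_sub_mul_slash_add, slash_sub_mul_slash_add]
      simp only [smul_mul_assoc, mul_smul_comm, one_mul, smul_smul]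
      ring_nf
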